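/- Let n be a natural number with prime factorisation n = p_1^{α_1} ⋯ p_t^{α_t} (the p_i distinct primes). Then every skew brace of order n is annihilator nilpotent if and only if α_i ≤ 2 for every i and p_i does not divide p_j^{α_j} − 1 for all i ≠ j. -/

import Mathlib

/-- A skew (left) brace: a set with two group structures `(A,+)` and `(A,∘)`
(the latter written multiplicatively) satisfying
`a ∘ (b + c) = a ∘ b - a + a ∘ c`. -/
class SkewBrace (A : Type*) extends AddGroup A, Group A where
  skew_left_distrib : ∀ a b c : A, a * (b + c) = a * b - a + a * c

/-- The annihilator series of a skew brace `A`, described internally: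
`Ann_0(A) = {0}` and `Ann_{m+1}(A)` is the preimage in `A` of
`Ann(A/Ann_m(A)) = Z(A/Ann_m(A),∘) ∩ Z(A/Ann_m(A),+) ∩ Ker(λ̄)`; concretely,
`a ∈ Ann_{m+1}(A)` iff for all `b`, `(a + b) - (b + a)`, `(-a + a ∘ b) - b`
and `(a ∘ b) - (b ∘ a)` all lie in `Ann_m(A)` (cosets being taken with
respect to `+`). -/
def annSeries (A : Type*) [SkewBrace A] : ℕ → Set A
  | 0 => {0}
  | m + 1 => {a : A | ∀ b : A,
      a + b - (b + a) ∈ annSeries A m ∧ (-a + a * b) - b ∈ annSeries A m ∧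
        a * b - b * a ∈ annSeries A m}

/-- A skew brace is annihilator nilpotent if `Ann_m(A) = A` for some `m`. -/
def IsAnnihilatorNilpotent (A : Type*) [SkewBrace A] : Prop :=
  ∃ m : ℕ, annSeries A m = Set.univ

/-!
If `n` is of the given form, every group of order `n` is abelian: a Sylow `p`-subgroup `P` is
abelian and `|Aut P|` is prime to its index, so `P` is central in its normalizer and the transfer to
`P` shows that `p` does not divide the order of the commutator subgroup. A skew brace of order `n`
is thus a commutative radical ring under `a ⋆ b = -a + a ∘ b - b`. There `a ⋆ b = a` forces `a = 0`,
so finiteness makes every product of sufficiently many elements vanish.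

Conversely, a skew brace of order `m ∣ n` is a quotient of one of order `n`, namely of its product
with a trivial skew brace on a cyclic group. It therefore suffices to give nontrivial skew braces
with trivial annihilator of order `p ^ 3`, and of order `q ^ α * p` when `p ∣ q ^ α - 1`. For the
latter take the trivial skew brace on the group of maps `t ↦ u * t + x` of the field with `q ^ α`
elements, with `u` ranging over a group of `p`-th roots of unity.
-/

section GroupTheory

open Subgroup

theorem fixedPoints_subgroup_eq_top_of_not_dvd {Q P : Type*} [Group Q] [Group P]
    [MulDistribMulAction Q P] {p q k : ℕ} (hp : p.Prime) (hq : q.Prime) (hqp : q ≠ p)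
    (hQ : IsPGroup q Q) (hP : Nat.card P = p ^ k) (h : ∀ i ∈ Set.Icc 1 k, ¬ q ∣ p ^ i - 1) :
    FixedPoints.subgroup Q P = ⊤ := by
  have := Fact.mk hq
  have : Finite P := Nat.finite_of_card_ne_zero (hP ▸ pow_ne_zero k hp.ne_zero)
  obtain ⟨j, hjk, hj⟩ := (Nat.dvd_prime_pow hp).1
    (hP ▸ (FixedPoints.subgroup Q P).card_subgroup_dvd_card)
  have hmod : p ^ j * p ^ (k - j) ≡ p ^ j * 1 [MOD q] := by
    rw [← pow_add, Nat.add_sub_cancel' hjk, mul_one, ← hP, ← hj]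
    exact hQ.card_modEq_card_fixedPoints P
  have hdvd : q ∣ p ^ (k - j) - 1 :=
    (Nat.modEq_iff_dvd' (Nat.one_le_pow _ _ hp.pos)).1
      (hmod.cancel_left_of_coprime (((Nat.coprime_primes hq hp).2 hqp).pow_right j)).symm
  have hkj : k ≤ j := by
    by_contra! hlt
    exact h (k - j) ⟨by lia, k.sub_le j⟩ hdvd
  exact eq_top_of_card_eq _ (by rw [hj, hP, hjk.antisymm hkj])

theorem not_dvd_card_mulAut {P : Type*} [Group P] {p q k : ℕ} (hp : p.Prime) (hq : q.Prime)
    (hqp : q ≠ p) (hP : Nat.card P = p ^ k) (h : ∀ i ∈ Set.Icc 1 k, ¬ q ∣ p ^ i - 1) :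
    ¬ q ∣ Nat.card (MulAut P) := by
  intro hdvd
  have := Fact.mk hq
  have : Finite P := Nat.finite_of_card_ne_zero (hP ▸ pow_ne_zero k hp.ne_zero)
  obtain ⟨σ, hσ⟩ := exists_prime_orderOf_dvd_card' q hdvd
  have hQ : IsPGroup q (zpowers σ) := .of_card (n := 1) (by rw [Nat.card_zpowers, hσ, pow_one])
  have hfix := fixedPoints_subgroup_eq_top_of_not_dvd hp hq hqp hQ hP h
  have hσ_one : σ = 1 := MulEquiv.ext fun x ↦
    (hfix ▸ mem_top x : x ∈ FixedPoints.subgroup (zpowers σ) P) ⟨σ, mem_zpowers σ⟩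
  rw [hσ_one, orderOf_one] at hσ
  exact hq.ne_one hσ.symm

theorem isMulCommutative_of_card_eq_prime_pow_le_two {P : Type*} [Group P] {p k : ℕ}
    (hp : p.Prime) (hP : Nat.card P = p ^ k) (hk : k ≤ 2) : IsMulCommutative P := by
  have := Fact.mk hp
  interval_cases k
  · have : Subsingleton P := (Nat.card_eq_one_iff_unique.1 (by simpa using hP)).1
    exact ⟨⟨fun _ _ ↦ Subsingleton.elim _ _⟩⟩
  · have : IsCyclic P := isCyclic_of_prime_card (by simpa using hP)
    infer_instance
  · exact IsPGroup.isMulCommutative_of_card_eq_prime_sq hP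

theorem normalizer_le_centralizer_of_coprime {G : Type*} [Group G] (H : Subgroup G)
    [IsMulCommutative H] (h : (Nat.card (MulAut H)).Coprime H.index) :
    normalizer (H : Set G) ≤ centralizer (H : Set G) := by
  have hdvd_aut : (centralizer (H : Set G)).relIndex (normalizer (H : Set G)) ∣
      Nat.card (MulAut H) := by
    rw [relIndex, ← normalizerMonoidHom_ker, index_ker]
    exact card_subgroup_dvd_card _
  have hdvd_index : (centralizer (H : Set G)).relIndex (normalizer (H : Set G)) ∣ H.index :=
    (relIndex_dvd_of_le_left _ H.le_centralizer).trans (relIndex_dvd_index_of_le le_normalizer)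
  exact relIndex_eq_one.1 (Nat.eq_one_of_dvd_coprimes h hdvd_aut hdvd_index)

theorem not_dvd_card_commutator {G : Type*} [Group G] [Finite G] {p : ℕ} [Fact p.Prime]
    (P : Sylow p G) (hP : normalizer (P : Set G) ≤ centralizer (P : Set G)) :
    ¬ p ∣ Nat.card (commutator G) := by
  have : IsMulCommutative P := le_centralizer_iff_isMulCommutative.1 (le_normalizer.trans hP)
  have hle : commutator G ≤ (MonoidHom.transferSylow P hP).ker := by
    open scoped IsMulCommutative in
    exact Abelianization.commutator_subset_ker _
  exact fun hdvd ↦ MonoidHom.not_dvd_card_ker_transferSylow P hP (hdvd.trans (card_dvd_of_le hle))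

theorem isMulCommutative_of_factorization_card_le_two {G : Type*} [Group G] [Finite G]
    (h₁ : ∀ p ∈ (Nat.card G).primeFactors, (Nat.card G).factorization p ≤ 2)
    (h₂ : ∀ p ∈ (Nat.card G).primeFactors, ∀ q ∈ (Nat.card G).primeFactors, p ≠ q →
      ¬ p ∣ q ^ (Nat.card G).factorization q - 1) :
    IsMulCommutative G := by
  rw [← commutator_eq_bot_iff, ← card_eq_one]
  by_contra hne
  obtain ⟨p, hp, hp_dvd⟩ := Nat.exists_prime_and_dvd hne
  have := Fact.mk hp
  have mem_primeFactors {q : ℕ} (hq : q.Prime) (hdvd : q ∣ Nat.card G) :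
      q ∈ (Nat.card G).primeFactors := Nat.mem_primeFactors.2 ⟨hq, hdvd, Nat.card_pos.ne'⟩
  have hpG := mem_primeFactors hp (hp_dvd.trans (commutator G).card_subgroup_dvd_card)
  obtain ⟨P⟩ : Nonempty (Sylow p G) := inferInstance
  have hP := P.card_eq_multiplicity
  have := isMulCommutative_of_card_eq_prime_pow_le_two hp hP (h₁ p hpG)
  refine not_dvd_card_commutator P
    (normalizer_le_centralizer_of_coprime (P : Subgroup G) ?_) hp_dvd
  refine Nat.coprime_of_dvd fun q hq hq_aut hq_index ↦ ?_
  have hqp : q ≠ p := by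
    rintro rfl
    exact P.not_dvd_index hq_index
  have hqG := mem_primeFactors hq (hq_index.trans P.index_dvd_card)
  refine not_dvd_card_mulAut hp hq hqp hP (fun i hi hqi ↦ h₂ q hqG p hpG hqp ?_) hq_aut
  have hi_dvd : i ∣ (Nat.card G).factorization p := by
    obtain ⟨hi_pos, hi_le⟩ := hi
    have hi_two := hi_le.trans (h₁ p hpG)
    interval_cases i
    · exact one_dvd _
    · rw [hi_le.antisymm (h₁ p hpG)]
  exact hqi.trans (Nat.pow_sub_one_dvd_pow_sub_one p hi_dvd)

theorem center_semidirectProduct_eq_bot {N G : Type*} [CommGroup N] [Group G]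
    {φ : G →* MulAut N} (hφ : Function.Injective φ) (hfix : ∀ n, (∀ g, φ g n = n) → n = 1) :
    center (N ⋊[φ] G) = ⊥ := by
  refine (eq_bot_iff_forall _).2 fun a ha ↦ ?_
  rw [mem_center_iff] at ha
  have hright : a.right = 1 := hφ <| MulEquiv.ext fun n ↦ by
    simpa [mul_comm n] using (congrArg SemidirectProduct.left (ha (.inl n))).symm
  have hleft : a.left = 1 := hfix _ fun g ↦ by
    simpa using congrArg SemidirectProduct.left (ha (.inr g))
  exact SemidirectProduct.ext hleft hright

/-- The action of a group `K` of nonzero scalars on the additive group of a field `F`, written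
multiplicatively so that `Multiplicative F ⋊[scalingAction K] K` is the group of affine maps
`t ↦ u * t + x` of `F` with `u ∈ K`. -/
def scalingAction {F : Type*} [Field F] (K : Subgroup Fˣ) : K →* MulAut (Multiplicative F) :=
  (MulAutMultiplicative F).symm.toMonoidHom.comp (DistribMulAction.toAddAut K F)

theorem center_semidirectProduct_scalingAction {F : Type*} [Field F] {K : Subgroup Fˣ}
    (hK : K ≠ ⊥) : center (Multiplicative F ⋊[scalingAction K] K) = ⊥ := by
  have happly (u : K) (x : F) :
      scalingAction K u (.ofAdd x) = .ofAdd (((u : Fˣ) : F) * x) := rfl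
  refine center_semidirectProduct_eq_bot (fun u v huv ↦ ?_) fun x hx ↦ ?_
  · have := DFunLike.congr_fun huv (.ofAdd 1)
    exact Subtype.ext (Units.ext (by simpa [happly] using this))
  · obtain ⟨u, hu⟩ := Subgroup.ne_bot_iff_exists_ne_one.1 hK
    have hux : ((u : Fˣ) : F) * x.toAdd = x.toAdd := hx u
    by_contra hx_ne
    exact hu (Subtype.ext (Units.ext ((mul_eq_right₀ hx_ne).1 hux)))

theorem exists_group_card_eq_mul_center_eq_bot {p q k : ℕ} (hp : p.Prime) (hq : q.Prime)
    (hk : k ≠ 0) (hdvd : p ∣ q ^ k - 1) :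
    ∃ (G : Type) (_ : Group G),
      Nontrivial G ∧ Nat.card G = q ^ k * p ∧ center G = ⊥ := by
  have := Fact.mk hp
  have := Fact.mk hq
  let F := GaloisField q k
  have hF : Nat.card F = q ^ k := GaloisField.card q k hk
  have : Finite F := Nat.finite_of_card_ne_zero (hF ▸ pow_ne_zero k hq.ne_zero)
  obtain ⟨u, hu⟩ := exists_prime_orderOf_dvd_card' (G := Fˣ) p (by rwa [Nat.card_units, hF])
  have hK : zpowers u ≠ ⊥ := by
    rw [Ne, zpowers_eq_bot, ← orderOf_eq_one_iff, hu]
    exact hp.ne_one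
  refine ⟨Multiplicative F ⋊[scalingAction (zpowers u)] zpowers u, inferInstance,
    SemidirectProduct.equivProd.nontrivial, ?_, center_semidirectProduct_scalingAction hK⟩
  rw [SemidirectProduct.card, Nat.card_zpowers, hu]
  exact congrArg (· * p) hF

end GroupTheory

namespace SkewBrace

variable {A : Type*} [SkewBrace A]

theorem one_eq_zero : (1 : A) = 0 := by
  simpa using skew_left_distrib (1 : A) 0 0

protected theorem mul_zero (a : A) : a * 0 = a := by rw [← one_eq_zero, mul_one]

protected theorem zero_mul (a : A) : 0 * a = a := by rw [← one_eq_zero, one_mul]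

theorem annSeries_monotone : Monotone (annSeries A) := by
  refine monotone_nat_of_le_succ fun m ↦ ?_
  induction m with
  | zero =>
    rintro a rfl b
    simp [annSeries, SkewBrace.mul_zero, SkewBrace.zero_mul]
  | succ m ih => exact fun a ha b ↦ ⟨ih (ha b).1, ih (ha b).2.1, ih (ha b).2.2⟩

theorem zero_mem_annSeries (m : ℕ) : (0 : A) ∈ annSeries A m :=
  annSeries_monotone m.zero_le rfl

/-- The star operation `a ⋆ b = -a + a ∘ b - b = λ_a(b) - b`. When both group structures are
abelian it is the multiplication of a commutative (non-unital) radical ring on `(A, +)`. -/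
def star (a b : A) : A := -a + a * b - b

local infixl:70 " ⋆ " => SkewBrace.star

theorem star_zero (a : A) : a ⋆ 0 = 0 := by simp [star, SkewBrace.mul_zero]

section AddCommutative

variable [IsAddCommutative A]

open scoped IsMulCommutative

theorem mul_eq_add_add_star (a b : A) : a * b = a + b + a ⋆ b := by
  unfold star
  abel

theorem star_add (a b c : A) : a ⋆ (b + c) = a ⋆ b + a ⋆ c := by
  simp only [star, skew_left_distrib]
  abel

theorem eq_zero_of_star_eq_self {a b : A} (h : a ⋆ b = a) : a = 0 := by
  have hneg : a ⋆ (-b) = -a := by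
    rw [eq_neg_iff_add_eq_zero]
    nth_rw 2 [← h]
    rw [← star_add, neg_add_cancel, star_zero]
  have hmul : a * (-b) = 0 * (-b) := by
    rw [mul_eq_add_add_star, hneg, SkewBrace.zero_mul]
    abel
  exact mul_right_cancel hmul

variable [IsMulCommutative A]

theorem star_comm (a b : A) : a ⋆ b = b ⋆ a := by
  simp only [star, mul_comm' a b]
  abel

theorem add_star (a b c : A) : (a + b) ⋆ c = a ⋆ c + b ⋆ c := by
  rw [star_comm, star_add, star_comm c, star_comm c]

theorem star_assoc (a b c : A) : a ⋆ b ⋆ c = a ⋆ (b ⋆ c) := by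
  have h := mul_assoc a b c
  simp only [mul_eq_add_add_star, star_add, add_star] at h
  rw [← sub_eq_zero] at h ⊢
  rw [← h]
  abel

theorem mem_annSeries_succ_iff {a : A} {m : ℕ} :
    a ∈ annSeries A (m + 1) ↔ ∀ b, a ⋆ b ∈ annSeries A m := by
  refine ⟨fun h b ↦ (h b).2.1, fun h b ↦ ⟨?_, h b, ?_⟩⟩
  · rw [add_comm' a b, sub_self]
    exact zero_mem_annSeries m
  · rw [mul_comm' a b, sub_self]
    exact zero_mem_annSeries m

/-- Induction along divisibility: a factorisation chain `a, a ⋆ b, a ⋆ b ⋆ c, …` in a finite `A`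
must reach `0`, since a repetition `x ⋆ b = x` forces `x = 0`. -/
theorem star_induction [Finite A] {motive : A → Prop} (zero : motive 0)
    (star : ∀ a, (∀ b, motive (a ⋆ b)) → motive a) (a : A) : motive a := by
  let r : A → A → Prop := fun x y ↦ x ≠ 0 ∧ ∃ b, y ⋆ b = x
  have : IsTrans A r := ⟨by
    rintro x y z ⟨hx, b, rfl⟩ ⟨-, c, rfl⟩
    exact ⟨hx, c ⋆ b, (star_assoc z c b).symm⟩⟩
  have : Std.Irrefl r := ⟨fun _ ⟨hx, _, h⟩ ↦ hx (eq_zero_of_star_eq_self h)⟩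
  induction a using (Finite.wellFounded_of_trans_of_irrefl r).induction with
  | _ a ih =>
    refine star a fun b ↦ ?_
    by_cases hb : a ⋆ b = 0
    · rwa [hb]
    · exact ih _ ⟨hb, b, rfl⟩

theorem isAnnihilatorNilpotent_of_commutative [Finite A] : IsAnnihilatorNilpotent A := by
  obtain ⟨m, hm⟩ := WellFoundedGT.monotone_chain_condition ⟨annSeries A, annSeries_monotone⟩
  refine ⟨m, Set.eq_univ_of_forall fun a ↦ ?_⟩
  induction a using star_induction with
  | zero => exact zero_mem_annSeries m
  | star a ih =>
    have hstab : annSeries A m = annSeries A (m + 1) := hm (m + 1) m.le_succ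
    rw [hstab]
    exact mem_annSeries_succ_iff.2 ih

end AddCommutative

theorem mapsTo_annSeries {A B : Type*} [SkewBrace A] [SkewBrace B] (f : A →+ B)
    (hf_mul : ∀ a b, f (a * b) = f a * f b) (hf : Function.Surjective f) (m : ℕ) :
    Set.MapsTo f (annSeries A m) (annSeries B m) := by
  induction m with
  | zero =>
    rintro a rfl
    exact map_zero f
  | succ m ih =>
    refine fun a ha ↦ hf.forall.2 fun b ↦ ?_
    simp only [← hf_mul, ← map_add, ← map_sub, ← map_neg]
    exact ⟨ih (ha b).1, ih (ha b).2.1, ih (ha b).2.2⟩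

theorem mem_annSeries_one_iff {A : Type*} [SkewBrace A] {a : A} :
    a ∈ annSeries A 1 ↔ ∀ b, a + b = b + a ∧ a * b = a + b ∧ a * b = b * a := by
  simp [annSeries, sub_eq_zero, neg_add_eq_iff_eq_add]

theorem not_isAnnihilatorNilpotent_of_annSeries_one {A : Type*} [SkewBrace A] [Nontrivial A]
    (h : annSeries A 1 = {0}) : ¬ IsAnnihilatorNilpotent A := by
  rintro ⟨m, hm⟩
  have hzero : annSeries A m = {0} := by
    clear hm
    induction m with
    | zero => rfl
    | succ m ih => rw [← h, annSeries, annSeries, ih, annSeries]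
  exact Set.singleton_ne_univ 0 (hzero.symm.trans hm)

instance {A B : Type*} [SkewBrace A] [SkewBrace B] : SkewBrace (A × B) where
  skew_left_distrib _ _ _ :=
    Prod.ext (skew_left_distrib _ _ _) (skew_left_distrib _ _ _)

end SkewBrace

theorem IsAnnihilatorNilpotent.of_surjective {A B : Type*} [SkewBrace A] [SkewBrace B]
    (hA : IsAnnihilatorNilpotent A) (f : A →+ B)
    (hf_mul : ∀ a b, f (a * b) = f a * f b) (hf : Function.Surjective f) :
    IsAnnihilatorNilpotent B := by
  obtain ⟨m, hm⟩ := hA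
  refine ⟨m, Set.eq_univ_of_forall <| hf.forall.2 fun a ↦ ?_⟩
  exact SkewBrace.mapsTo_annSeries f hf_mul hf m (hm ▸ Set.mem_univ a)

/-- The trivial skew brace on a group `G`: both operations are the multiplication of `G`. It is a
type synonym so that `G` itself receives no additive structure. -/
def TrivialSkewBrace (G : Type*) : Type _ := G

namespace TrivialSkewBrace

variable {G : Type*} [Group G]

instance : Group (TrivialSkewBrace G) := inferInstanceAs (Group G)

instance : AddGroup (TrivialSkewBrace G) := inferInstanceAs (AddGroup (Additive G))

instance : SkewBrace (TrivialSkewBrace G) where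
  skew_left_distrib a b c := by
    have h (a b c : G) : a * (b * c) = a * b / a * (a * c) := by simp [div_eq_mul_inv, mul_assoc]
    exact h a b c

theorem add_eq_mul (a b : TrivialSkewBrace G) : a + b = a * b := rfl

theorem annSeries_one :
    annSeries (TrivialSkewBrace G) 1 = Subgroup.center (TrivialSkewBrace G) := by
  ext a
  simp [SkewBrace.mem_annSeries_one_iff, Subgroup.mem_center_iff, add_eq_mul, eq_comm]

theorem not_isAnnihilatorNilpotent [Nontrivial G] (hG : Subgroup.center G = ⊥) :
    ¬ IsAnnihilatorNilpotent (TrivialSkewBrace G) := by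
  have : Nontrivial (TrivialSkewBrace G) := ‹Nontrivial G›
  refine SkewBrace.not_isAnnihilatorNilpotent_of_annSeries_one ?_
  rw [annSeries_one]
  exact congrArg _ hG

end TrivialSkewBrace

theorem isAnnihilatorNilpotent_of_card_dvd {n : ℕ} (hn : n ≠ 0)
    (h : ∀ (A : Type) [Fintype A] [SkewBrace A], Fintype.card A = n → IsAnnihilatorNilpotent A)
    {B : Type} [SkewBrace B] (hB : Nat.card B ∣ n) : IsAnnihilatorNilpotent B := by
  have : Finite B := Nat.finite_of_card_ne_zero (ne_zero_of_dvd_ne_zero hn hB)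
  obtain ⟨m, rfl⟩ := hB
  have : NeZero m := ⟨right_ne_zero_of_mul hn⟩
  have : Finite (TrivialSkewBrace (Multiplicative (ZMod m))) := inferInstanceAs (Finite (ZMod m))
  let := Fintype.ofFinite (B × TrivialSkewBrace (Multiplicative (ZMod m)))
  refine (h (B × TrivialSkewBrace (Multiplicative (ZMod m))) ?_).of_surjective
    (AddMonoidHom.fst _ _) (fun _ _ ↦ rfl) Prod.fst_surjective
  rw [← Nat.card_eq_fintype_card, Nat.card_prod]
  exact congrArg _ (Nat.card_zmod m)

/-- A skew brace of order `|R| ^ 3` with trivial annihilator. Its points are the triples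
`(x, y, z)`; both groups are of Heisenberg type, but with different twisted coordinates:
`z + z' + x y' - x' y` for the addition and `y + y' + z x'` for the multiplication. -/
@[ext]
structure HeisenbergBrace (R : Type*) where
  x : R
  y : R
  z : R

namespace HeisenbergBrace

variable {R : Type*}

/-- The coordinates of a point of the Heisenberg brace. -/
def equivProd : HeisenbergBrace R ≃ R × R × R where
  toFun a := (a.x, a.y, a.z)
  invFun t := ⟨t.1, t.2.1, t.2.2⟩

theorem card : Nat.card (HeisenbergBrace R) = Nat.card R ^ 3 := by
  rw [Nat.card_congr equivProd, Nat.card_prod, Nat.card_prod]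
  ring

variable [CommRing R]

instance : Add (HeisenbergBrace R) :=
  ⟨fun a b ↦ ⟨a.x + b.x, a.y + b.y, a.z + b.z + a.x * b.y - b.x * a.y⟩⟩

instance : Zero (HeisenbergBrace R) := ⟨⟨0, 0, 0⟩⟩

instance : Neg (HeisenbergBrace R) := ⟨fun a ↦ ⟨-a.x, -a.y, -a.z⟩⟩

instance : Mul (HeisenbergBrace R) :=
  ⟨fun a b ↦ ⟨a.x + b.x, a.y + b.y + a.z * b.x, a.z + b.z⟩⟩

instance : One (HeisenbergBrace R) := ⟨⟨0, 0, 0⟩⟩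

instance : Inv (HeisenbergBrace R) := ⟨fun a ↦ ⟨-a.x, -a.y + a.z * a.x, -a.z⟩⟩

theorem add_def (a b : HeisenbergBrace R) :
    a + b = ⟨a.x + b.x, a.y + b.y, a.z + b.z + a.x * b.y - b.x * a.y⟩ := rfl

theorem zero_def : (0 : HeisenbergBrace R) = ⟨0, 0, 0⟩ := rfl

theorem neg_def (a : HeisenbergBrace R) : -a = ⟨-a.x, -a.y, -a.z⟩ := rfl

theorem mul_def (a b : HeisenbergBrace R) :
    a * b = ⟨a.x + b.x, a.y + b.y + a.z * b.x, a.z + b.z⟩ := rfl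

theorem one_def : (1 : HeisenbergBrace R) = ⟨0, 0, 0⟩ := rfl

theorem inv_def (a : HeisenbergBrace R) : a⁻¹ = ⟨-a.x, -a.y + a.z * a.x, -a.z⟩ := rfl

instance : AddGroup (HeisenbergBrace R) :=
  .ofLeftAxioms
    (fun _ _ _ ↦ by ext <;> simp only [add_def] <;> ring)
    (fun _ ↦ by ext <;> simp only [add_def, zero_def] <;> ring)
    (fun _ ↦ by ext <;> simp only [add_def, neg_def, zero_def] <;> ring)

instance : Group (HeisenbergBrace R) :=
  .ofLeftAxioms
    (fun _ _ _ ↦ by ext <;> simp only [mul_def] <;> ring)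
    (fun _ ↦ by ext <;> simp only [mul_def, one_def] <;> ring)
    (fun _ ↦ by ext <;> simp only [mul_def, inv_def, one_def] <;> ring)

instance : SkewBrace (HeisenbergBrace R) where
  skew_left_distrib _ _ _ := by
    ext <;> simp only [sub_eq_add_neg, add_def, neg_def, mul_def] <;> ring

theorem annSeries_one : annSeries (HeisenbergBrace R) 1 = {0} := by
  refine Set.Subset.antisymm (fun a ha ↦ ?_) (Set.singleton_subset_iff.2 <|
    SkewBrace.zero_mem_annSeries 1)
  have hmul b := (SkewBrace.mem_annSeries_one_iff.1 ha b).2.1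
  obtain ⟨hz, hyz⟩ : a.z = 0 ∧ a.z = a.z - a.y := by
    simpa [mul_def, add_def] using hmul ⟨1, 0, 0⟩
  have hy : a.y = 0 := by simpa [hz] using hyz
  have hx : a.x = 0 := by simpa [mul_def, add_def] using hmul ⟨0, 1, 0⟩
  exact HeisenbergBrace.ext hx hy hz

theorem not_isAnnihilatorNilpotent [Nontrivial R] :
    ¬ IsAnnihilatorNilpotent (HeisenbergBrace R) := by
  have : Nontrivial (HeisenbergBrace R) := equivProd.nontrivial
  exact SkewBrace.not_isAnnihilatorNilpotent_of_annSeries_one annSeries_one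

end HeisenbergBrace

/-- Every skew brace of order `n` is annihilator nilpotent iff the prime
factorisation of `n` is cube-free and `p ∤ q^{α_q} - 1` for distinct primes
`p, q` dividing `n`. -/
theorem every_skewBrace_is_annihilator_nilpotent_iff (n : ℕ) (hn : 0 < n) :
    (∀ (A : Type) [Fintype A] [SkewBrace A], Fintype.card A = n →
      IsAnnihilatorNilpotent A) ↔
    ((∀ p ∈ n.primeFactors, n.factorization p ≤ 2) ∧
      (∀ p ∈ n.primeFactors, ∀ q ∈ n.primeFactors, p ≠ q →
        ¬ p ∣ q ^ n.factorization q - 1)) := by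
  refine ⟨fun h ↦ ⟨fun p hp ↦ ?_, fun p hp q hq hpq hdvd ↦ ?_⟩, fun ⟨h₁, h₂⟩ A _ _ hA ↦ ?_⟩
  · have hp_prime := Nat.prime_of_mem_primeFactors hp
    have := Fact.mk hp_prime
    by_contra! hlt
    refine HeisenbergBrace.not_isAnnihilatorNilpotent (R := ZMod p)
      (isAnnihilatorNilpotent_of_card_dvd hn.ne' h ?_)
    rw [HeisenbergBrace.card, Nat.card_zmod]
    exact (hp_prime.pow_dvd_iff_le_factorization hn.ne').2 hlt
  · have hp_prime := Nat.prime_of_mem_primeFactors hp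
    have hq_prime := Nat.prime_of_mem_primeFactors hq
    obtain ⟨G, _, _, hcard, hcenter⟩ := exists_group_card_eq_mul_center_eq_bot hp_prime hq_prime
      (Finsupp.mem_support_iff.1 hq) hdvd
    refine TrivialSkewBrace.not_isAnnihilatorNilpotent hcenter
      (isAnnihilatorNilpotent_of_card_dvd hn.ne' h (hcard ▸ ?_))
    exact (((Nat.coprime_primes hq_prime hp_prime).2 hpq.symm).pow_left _).mul_dvd_of_dvd_of_dvd
      (Nat.ordProj_dvd n q) (Nat.dvd_of_mem_primeFactors hp)
  · obtain rfl : Nat.card A = n := Nat.card_eq_fintype_card.trans hA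
    have : IsMulCommutative A := isMulCommutative_of_factorization_card_le_two h₁ h₂
    have : IsMulCommutative (Multiplicative A) :=
      isMulCommutative_of_factorization_card_le_two h₁ h₂
    have : IsAddCommutative A := ⟨⟨fun a b ↦ mul_comm' (Multiplicative.ofAdd a) (.ofAdd b)⟩⟩
    exact SkewBrace.isAnnihilatorNilpotent_of_commutative
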